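/- Discrete parabolic Caccioppoli inequality: There exists a constant C > 0 depending only on constants 0 < a ≤ A < ∞ such that the following holds. Let x₀ ∈ ℤ², r ≥ 1, and for each nearest-neighbor edge b of ℤ² and each t ∈ [0, 2r²] let c_t(b) ∈ [a, A] be measurable in t. Suppose f : [0, 2r²] × ℤ² → ℝ is such that for every x ∈ B(x₀, 2r), t ↦ f_t(x) is differentiable with ∂_t f_t(x) = Σ_{y∼x} c_t((x, y)) (f_t(y) − f_t(x)) for t ∈ [0, 2r²]. Then ∫_{r²}^{2r²} Σ_{b ∈ B*(x₀, r)} |∇f_t(b)|² dt ≤ (C/r²) ∫_0^{2r²} Σ_{y ∈ B(x₀, 2r)} f_t(y)² dt, where B*(x₀, r) denotes the set of nearest-neighbor edges with both endpoints in B(x₀, r). -/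

import Mathlib

/-!
The proof is the energy method with a cutoff `η` in space and a linear weight in time.

For symmetric nonnegative weights `κ` on a finite set, summation by parts and Young's inequality on
each edge bound the time derivative of `∑ η² f²` along the flow by
`2 ∑ₓ (∑ᵧ κ(x, y) (η(y) - η(x))²) f(x)² - ¼ ∑ₓ ∑ᵧ κ(x, y) (η(x)² + η(y)²) (f(y) - f(x))²`.
The cutoff is `1` on `B(x₀, r)`, changes by at most `2 / r` across an edge, and vanishes outside
`B(x₀, 2r - 1)`, so only values of `f` in `B(x₀, 2r)` enter. With `F = ∑ η² f²`,
`S = ∑_{B(x₀, 2r)} f²` and `D = ∑_{B*(x₀, r)} |∇f|²` this gives `F' ≤ (32 A / r²) S - (a / 2) D`.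

Multiplying by `t` removes the initial value: `(t F)' ≤ (1 + 64 A) S - (a / 2) t D` on `[0, 2r²]`.
The right side is integrable even when `F'` is not, and `F ≥ 0`, so integration yields the claim
with `C = 2 (1 + 64 A) / a`.
-/

open MeasureTheory ProbabilityTheory Real
open scoped ENNReal NNReal Classical

noncomputable section

abbrev Z2 := ℤ × ℤ

/-- Nearest-neighbor adjacency in `ℤ²` (Euclidean distance one). -/
def adjZ (x y : Z2) : Prop := (x.1 - y.1) ^ 2 + (x.2 - y.2) ^ 2 = 1

/-- Exterior vertex boundary `∂D` of a set `D ⊆ ℤ²`. -/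
def bdry (D : Set Z2) : Set Z2 := {x | x ∉ D ∧ ∃ y ∈ D, adjZ x y}

/-- Euclidean distance on `ℤ²`. -/
def edist2 (x y : Z2) : ℝ :=
  Real.sqrt (((x.1 : ℝ) - (y.1 : ℝ)) ^ 2 + ((x.2 : ℝ) - (y.2 : ℝ)) ^ 2)

/-- Euclidean distance from a point to a set. -/
def distToSet (x : Z2) (S : Set Z2) : ℝ := sInf (edist2 x '' S)

/-- Euclidean diameter of a set in `ℤ²`. -/
def diamZ (D : Set Z2) : ℝ := sSup {d : ℝ | ∃ x ∈ D, ∃ y ∈ D, d = edist2 x y}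

/-- Discrete Euclidean ball. -/
def ballZ (y : Z2) (r : ℝ) : Set Z2 := {z | edist2 z y ≤ r}

/-- Positively oriented nearest-neighbor edges with at least one endpoint in `D`. -/
def edgesOf (D : Set Z2) : Set (Z2 × Z2) :=
  {b | (b.2 = b.1 + ((1, 0) : Z2) ∨ b.2 = b.1 + ((0, 1) : Z2)) ∧ (b.1 ∈ D ∨ b.2 ∈ D)}

/-- Positively oriented nearest-neighbor edges with both endpoints in `D`. -/
def intEdges (D : Set Z2) : Set (Z2 × Z2) :=
  {b | (b.2 = b.1 + ((1, 0) : Z2) ∨ b.2 = b.1 + ((0, 1) : Z2)) ∧ b.1 ∈ D ∧ b.2 ∈ D}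

/-- Edges with one endpoint in `D` and the other in `∂D`. -/
def bdEdges (D : Set Z2) : Set (Z2 × Z2) :=
  {b | (b.2 = b.1 + ((1, 0) : Z2) ∨ b.2 = b.1 + ((0, 1) : Z2)) ∧
    ((b.1 ∈ D ∧ b.2 ∈ bdry D) ∨ (b.1 ∈ bdry D ∧ b.2 ∈ D))}

/-- The endpoint of an edge lying outside `D` (for boundary edges). -/
def bEnd (D : Set Z2) (b : Z2 × Z2) : Z2 := if b.1 ∈ D then b.2 else b.1

/-- Discrete gradient of `f` across the oriented edge `b`. -/
def grad (f : Z2 → ℝ) (b : Z2 × Z2) : ℝ := f b.2 - f b.1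

/-- `D ⊆ ℤ²` is connected (as an induced subgraph of the nearest-neighbor lattice). -/
def DiscConnected (D : Set Z2) : Prop :=
  D.Nonempty ∧ ∀ x ∈ D, ∀ y ∈ D, ∃ (n : ℕ) (p : ℕ → Z2),
    p 0 = x ∧ p n = y ∧ (∀ i ≤ n, p i ∈ D) ∧ ∀ i < n, adjZ (p i) (p (i + 1))

/-- `h ∨ φ`: the field `h` on `D` extended by the boundary condition `φ` off `D`. -/
def vee (D : Finset Z2) (h : ↥D → ℝ) (φ : Z2 → ℝ) : Z2 → ℝ :=
  fun x => if hx : x ∈ D then h ⟨x, hx⟩ else φ x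

/-- Ginzburg–Landau Hamiltonian `∑_{b ∈ D*} V(∇(h∨φ)(b))`. -/
def glEnergy (V : ℝ → ℝ) (D : Finset Z2) (φ : Z2 → ℝ) (h : ↥D → ℝ) : ℝ :=
  ∑ᶠ b ∈ edgesOf (D : Set Z2), V (grad (vee D h φ) b)

/-- Unnormalized GL measure: density `exp(−H)` w.r.t. Lebesgue measure on `ℝ^D`. -/
def glFree (V : ℝ → ℝ) (D : Finset Z2) (φ : Z2 → ℝ) : Measure (↥D → ℝ) :=
  volume.withDensity fun h => ENNReal.ofReal (Real.exp (-(glEnergy V D φ h)))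

/-- `P` is the GL measure on `D` with potential `V` and boundary condition `φ`:
a probability measure proportional to `exp(−H) dh`. -/
def IsGL (V : ℝ → ℝ) (D : Finset Z2) (φ : Z2 → ℝ) (P : Measure (↥D → ℝ)) : Prop :=
  IsProbabilityMeasure P ∧ ∃ c : ℝ≥0∞, c ≠ 0 ∧ c ≠ ⊤ ∧ P = c • glFree V D φ

/-- `μ` is a coupling of `P` and `Q`. -/
def IsCoupling {α : Type*} [MeasurableSpace α] (μ : Measure (α × α)) (P Q : Measure α) : Prop :=
  IsProbabilityMeasure μ ∧ μ.map Prod.fst = P ∧ μ.map Prod.snd = Q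

/-- `f` is discrete-harmonic at `x`: the sum of the increments to the four neighbors vanishes. -/
def DiscHarmAt (f : Z2 → ℝ) (x : Z2) : Prop :=
  f (x + ((1, 0) : Z2)) + f (x - ((1, 0) : Z2)) + f (x + ((0, 1) : Z2)) + f (x - ((0, 1) : Z2))
    - 4 * f x = 0

/-- `D(r) = {x ∈ D : dist(x, ∂D) ≥ r}`. -/
def innerSet (D : Finset Z2) (r : ℝ) : Set Z2 :=
  {x | x ∈ D ∧ r ≤ distToSet x (bdry (D : Set Z2))}


/-- The four lattice directions. -/
def nbrs : Finset Z2 := {((1, 0) : Z2), ((-1, 0) : Z2), ((0, 1) : Z2), ((0, -1) : Z2)}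

section WeightedGraph

variable {V R : Type*} {B : Finset V}

lemma two_mul_sum_mul_weighted_laplacian [CommRing R] {κ : V → V → R}
    (hκ : ∀ x y, κ x y = κ y x) (g u : V → R) :
    2 * ∑ x ∈ B, g x * ∑ y ∈ B, κ x y * (u y - u x)
      = -∑ x ∈ B, ∑ y ∈ B, κ x y * ((u y - u x) * (g y - g x)) := by
  have swap : ∑ x ∈ B, ∑ y ∈ B, g x * (κ x y * (u y - u x))
      = ∑ x ∈ B, ∑ y ∈ B, g y * (κ x y * (u x - u y)) := by
    rw [Finset.sum_comm]
    simp only [hκ]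
  simp only [Finset.mul_sum _ _ (g _)]
  rw [two_mul]
  nth_rewrite 2 [swap]
  simp only [← Finset.sum_add_distrib, ← Finset.sum_neg_distrib]
  exact Finset.sum_congr rfl fun x _ => Finset.sum_congr rfl fun y _ => by ring

lemma caccioppoli_edge [CommRing R] [LinearOrder R] [IsStrictOrderedRing R] (p q u v : R) :
    -(4 * ((v - u) * (q ^ 2 * v - p ^ 2 * u)))
      ≤ 4 * ((q - p) ^ 2 * (u ^ 2 + v ^ 2)) - (p ^ 2 + q ^ 2) * (v - u) ^ 2 := by
  have complete_square : 2 * (4 * ((q - p) ^ 2 * (u ^ 2 + v ^ 2)) - (p ^ 2 + q ^ 2) * (v - u) ^ 2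
      + 4 * ((v - u) * (q ^ 2 * v - p ^ 2 * u)))
      = ((q + p) * (v - u) + 2 * ((q - p) * (u + v))) ^ 2 + 5 * ((q - p) * (v - u)) ^ 2 := by
    ring
  rw [neg_le_iff_add_nonneg, ← mul_nonneg_iff_of_pos_left zero_lt_two, complete_square]
  positivity

lemma caccioppoli_weighted [Field R] [LinearOrder R] [IsStrictOrderedRing R] {κ : V → V → R}
    (hκ : ∀ x y, κ x y = κ y x) (hκ₀ : ∀ x y, 0 ≤ κ x y) (η u : V → R) :
    2 * ∑ x ∈ B, η x ^ 2 * u x * ∑ y ∈ B, κ x y * (u y - u x)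
      ≤ 2 * ∑ x ∈ B, (∑ y ∈ B, κ x y * (η y - η x) ^ 2) * u x ^ 2
        - 1 / 4 * ∑ x ∈ B, ∑ y ∈ B, κ x y * ((η x ^ 2 + η y ^ 2) * (u y - u x) ^ 2) := by
  have symmetrize : 2 * ∑ x ∈ B, (∑ y ∈ B, κ x y * (η y - η x) ^ 2) * u x ^ 2
      = ∑ x ∈ B, ∑ y ∈ B, κ x y * ((η y - η x) ^ 2 * (u x ^ 2 + u y ^ 2)) := by
    have swap : ∑ x ∈ B, ∑ y ∈ B, κ x y * (η y - η x) ^ 2 * u x ^ 2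
        = ∑ x ∈ B, ∑ y ∈ B, κ x y * (η y - η x) ^ 2 * u y ^ 2 := by
      rw [Finset.sum_comm]
      exact Finset.sum_congr rfl fun x _ => Finset.sum_congr rfl fun y _ => by rw [hκ y x]; ring
    simp only [Finset.sum_mul]
    rw [two_mul]
    nth_rewrite 2 [swap]
    simp only [← Finset.sum_add_distrib]
    exact Finset.sum_congr rfl fun x _ => Finset.sum_congr rfl fun y _ => by ring
  rw [two_mul_sum_mul_weighted_laplacian hκ fun x => η x ^ 2 * u x, symmetrize]
  simp only [Finset.mul_sum, ← Finset.sum_neg_distrib, ← Finset.sum_sub_distrib]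
  refine Finset.sum_le_sum fun x _ => Finset.sum_le_sum fun y _ => ?_
  linarith [mul_le_mul_of_nonneg_left (caccioppoli_edge (η x) (η y) (u x) (u y)) (hκ₀ x y)]

end WeightedGraph

lemma hasDerivAt_sum_mul_sq {ι : Type*} {B : Finset ι} {f : ℝ → ι → ℝ} {f' : ι → ℝ} {t : ℝ}
    (hf : ∀ x ∈ B, HasDerivAt (fun s => f s x) (f' x) t) (w : ι → ℝ) :
    HasDerivAt (fun s => ∑ x ∈ B, w x * f s x ^ 2) (∑ x ∈ B, w x * (2 * f t x * f' x)) t :=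
  HasDerivAt.fun_sum fun x hx => by simpa using ((hf x hx).fun_pow 2).const_mul (w x)

lemma mul_integral_le_integral_id_mul {D : ℝ → ℝ} {τ T : ℝ} (hτ : 0 ≤ τ) (hτT : τ ≤ T)
    (hD : IntervalIntegrable D volume 0 T) (hD₀ : ∀ t ∈ Set.Icc 0 T, 0 ≤ D t) :
    τ * ∫ t in τ..T, D t ≤ ∫ t in (0 : ℝ)..T, t * D t := by
  have hsub : Set.uIcc τ T ⊆ Set.uIcc 0 T := by
    rw [Set.uIcc_of_le hτT, Set.uIcc_of_le (hτ.trans hτT)]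
    exact Set.Icc_subset_Icc_left hτ
  have htD : IntervalIntegrable (fun t => t * D t) volume 0 T := hD.continuousOn_mul continuousOn_id
  calc τ * ∫ t in τ..T, D t = ∫ t in τ..T, τ * D t :=
        (intervalIntegral.integral_const_mul _ _).symm
    _ ≤ ∫ t in τ..T, t * D t :=
        intervalIntegral.integral_mono_on hτT ((hD.mono_set hsub).const_mul τ) (htD.mono_set hsub)
          fun t ht => mul_le_mul_of_nonneg_right ht.1 (hD₀ t ⟨hτ.trans ht.1, ht.2⟩)
    _ ≤ ∫ t in (0 : ℝ)..T, t * D t :=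
        intervalIntegral.integral_mono_interval hτ hτT le_rfl
          (ae_restrict_of_forall_mem measurableSet_Ioc fun t ht =>
            mul_nonneg ht.1.le (hD₀ t (Set.Ioc_subset_Icc_self ht))) htD

lemma mul_integral_dissipation_le {F F' S D : ℝ → ℝ} {k K τ T : ℝ} (hk : 0 ≤ k) (hK : 0 ≤ K)
    (hτ : 0 ≤ τ) (hτT : τ ≤ T) (hF : ContinuousOn F (Set.Icc 0 T))
    (hF' : ∀ t ∈ Set.Ioo 0 T, HasDerivAt F (F' t) t) (hF₀ : ∀ t ∈ Set.Icc 0 T, 0 ≤ F t)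
    (hFS : ∀ t ∈ Set.Icc 0 T, F t ≤ S t) (hS : IntervalIntegrable S volume 0 T)
    (hD : IntervalIntegrable D volume 0 T) (hD₀ : ∀ t ∈ Set.Icc 0 T, 0 ≤ D t)
    (hle : ∀ t ∈ Set.Ioo 0 T, F' t ≤ K * S t - k * D t) :
    k * (τ * ∫ t in τ..T, D t) ≤ (1 + K * T) * ∫ t in (0 : ℝ)..T, S t := by
  have hT : 0 ≤ T := hτ.trans hτT
  have hS' := hS.const_mul (1 + K * T)
  have htD : IntervalIntegrable (fun t => k * (t * D t)) volume 0 T :=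
    (hD.continuousOn_mul continuousOn_id).const_mul k
  have deriv_le : ∀ t ∈ Set.Ioo 0 T, 1 * F t + t * F' t ≤ (1 + K * T) * S t - k * (t * D t) := by
    intro t ht
    have htT := Set.Ioo_subset_Icc_self ht
    have hSt : K * (t * S t) ≤ K * (T * S t) := by
      gcongr
      exacts [(hF₀ t htT).trans (hFS t htT), ht.2.le]
    linarith [hFS t htT, mul_le_mul_of_nonneg_left (hle t ht) ht.1.le]
  have integrated : T * F T - 0 * F 0 ≤ ∫ t in (0 : ℝ)..T, ((1 + K * T) * S t - k * (t * D t)) :=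
    intervalIntegral.sub_le_integral_of_hasDeriv_right_of_le hT (continuousOn_id.mul hF)
      (fun t ht => ((hasDerivAt_id t).mul (hF' t ht)).hasDerivWithinAt)
      ((intervalIntegrable_iff_integrableOn_Icc_of_le hT).1 (hS'.sub htD)) deriv_le
  rw [intervalIntegral.integral_sub hS' htD, intervalIntegral.integral_const_mul,
    intervalIntegral.integral_const_mul] at integrated
  have hTF : 0 ≤ T * F T := mul_nonneg hT (hF₀ T ⟨hT, le_rfl⟩)
  have hτD := mul_le_mul_of_nonneg_left (mul_integral_le_integral_id_mul hτ hτT hD hD₀) hk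
  linarith

lemma edist2_eq_dist (x y : Z2) : edist2 x y = dist (⟨x.1, x.2⟩ : ℂ) ⟨y.1, y.2⟩ :=
  (Complex.dist_mk _ _ _ _).symm

lemma abs_edist2_sub_le (x y z : Z2) : |edist2 x z - edist2 y z| ≤ edist2 x y := by
  simpa only [edist2_eq_dist] using abs_dist_sub_le _ _ _

lemma adjZ.edist2_eq_one {x y : Z2} (h : adjZ x y) : edist2 x y = 1 := by
  rw [edist2, Real.sqrt_eq_one]
  exact_mod_cast h

lemma adjZ_comm {x y : Z2} : adjZ x y ↔ adjZ y x := by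
  rw [adjZ, adjZ, sub_sq_comm x.1, sub_sq_comm x.2]

lemma adjZ_iff_sub_mem_nbrs {x y : Z2} : adjZ x y ↔ y - x ∈ nbrs := by
  rw [adjZ_comm, adjZ, ← Prod.fst_sub, ← Prod.snd_sub]
  generalize y - x = e
  obtain ⟨m, n⟩ := e
  simp only [nbrs, Finset.mem_insert, Finset.mem_singleton, Prod.mk.injEq]
  constructor
  · intro h
    have hm := abs_le.1 (sq_le_one_iff_abs_le_one m |>.1 (by linarith [sq_nonneg n]))
    have hn := abs_le.1 (sq_le_one_iff_abs_le_one n |>.1 (by linarith [sq_nonneg m]))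
    obtain ⟨hm₁, hm₂⟩ := hm
    obtain ⟨hn₁, hn₂⟩ := hn
    interval_cases m <;> interval_cases n <;> simp_all
  · rintro (⟨rfl, rfl⟩ | ⟨rfl, rfl⟩ | ⟨rfl, rfl⟩ | ⟨rfl, rfl⟩) <;> norm_num

lemma ballZ_finite (x0 : Z2) (s : ℝ) : (ballZ x0 s).Finite := by
  refine (Set.finite_Icc (x0 - (⌊s⌋, ⌊s⌋)) (x0 + (⌊s⌋, ⌊s⌋))).subset fun z hz => ?_
  have h₁ : |z.1 - x0.1| ≤ ⌊s⌋ := Int.le_floor.2 <| by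
    push_cast
    exact (Real.abs_le_sqrt (le_add_of_nonneg_right (sq_nonneg _))).trans hz
  have h₂ : |z.2 - x0.2| ≤ ⌊s⌋ := Int.le_floor.2 <| by
    push_cast
    exact (Real.abs_le_sqrt (le_add_of_nonneg_left (sq_nonneg _))).trans hz
  rw [abs_sub_le_iff] at h₁ h₂
  simp only [Set.mem_Icc, Prod.le_def, Prod.fst_sub, Prod.snd_sub, Prod.fst_add, Prod.snd_add]
  omega

lemma ballZ_subset_ballZ (x0 : Z2) {r s : ℝ} (h : r ≤ s) : ballZ x0 r ⊆ ballZ x0 s :=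
  fun _ hz => le_trans hz h

lemma intEdges_finite {D : Set Z2} (hD : D.Finite) : (intEdges D).Finite :=
  (hD.prod hD).subset fun _ hb => ⟨hb.2.1, hb.2.2⟩

lemma adjZ_of_mem_intEdges {D : Set Z2} {b : Z2 × Z2} (hb : b ∈ intEdges D) : adjZ b.1 b.2 := by
  rw [adjZ_iff_sub_mem_nbrs]
  rcases hb.1 with h | h <;> simp [h, nbrs]

section EdgeWeight

/-- The rates `c` extended by zero to pairs of nonadjacent points, so that a sum over the neighbors
of a point becomes a sum over any finite set containing them. -/
def edgeWeight (c : Z2 → Z2 → ℝ) (x y : Z2) : ℝ := if adjZ x y then c x y else 0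

variable {c : Z2 → Z2 → ℝ} {a A : ℝ} {B : Finset Z2}

lemma edgeWeight_comm (hc : ∀ x y, c x y = c y x) (x y : Z2) :
    edgeWeight c x y = edgeWeight c y x := by
  simp only [edgeWeight, adjZ_comm (x := x), hc x]

lemma edgeWeight_nonneg (hc : ∀ x y, adjZ x y → 0 ≤ c x y) (x y : Z2) : 0 ≤ edgeWeight c x y := by
  unfold edgeWeight
  split_ifs with h
  exacts [hc x y h, le_rfl]

lemma sum_edgeWeight_mul {x : Z2} (hB : ∀ y, adjZ x y → y ∈ B) (h : Z2 → ℝ) :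
    ∑ y ∈ B, edgeWeight c x y * h y = ∑ e ∈ nbrs, c x (x + e) * h (x + e) := by
  simp only [edgeWeight, ite_mul, zero_mul, ← Finset.sum_filter]
  refine Finset.sum_nbij' (· - x) (x + ·) ?_ ?_ ?_ ?_ ?_
  · exact fun y hy => adjZ_iff_sub_mem_nbrs.1 (Finset.mem_filter.1 hy).2
  · intro e he
    have hadj : adjZ x (x + e) := adjZ_iff_sub_mem_nbrs.2 (by rwa [add_sub_cancel_left])
    exact Finset.mem_filter.2 ⟨hB _ hadj, hadj⟩
  · exact fun y _ => add_sub_cancel x y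
  · exact fun e _ => add_sub_cancel_left x e
  · exact fun y _ => by rw [add_sub_cancel]

lemma card_filter_adjZ_le (B : Finset Z2) (x : Z2) : (B.filter (adjZ x)).card ≤ 4 :=
  Finset.card_le_card_of_injOn (t := nbrs) (· - x)
    (fun _ hy => adjZ_iff_sub_mem_nbrs.1 (Finset.mem_filter.1 hy).2) sub_left_injective.injOn

lemma sum_edgeWeight_mul_le (hA : 0 ≤ A) (hc : ∀ x y, adjZ x y → c x y ≤ A) {h : Z2 → ℝ} {k : ℝ}
    (x : Z2) (hh₀ : ∀ y, 0 ≤ h y) (hh : ∀ y, adjZ x y → h y ≤ k) (hk : 0 ≤ k) :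
    ∑ y ∈ B, edgeWeight c x y * h y ≤ 4 * (A * k) := by
  simp only [edgeWeight, ite_mul, zero_mul, ← Finset.sum_filter]
  calc ∑ y ∈ B with adjZ x y, c x y * h y ≤ (B.filter (adjZ x)).card • (A * k) :=
        Finset.sum_le_card_nsmul _ _ _ fun y hy =>
          have hxy := (Finset.mem_filter.1 hy).2
          mul_le_mul (hc x y hxy) (hh y hxy) (hh₀ y) hA
    _ ≤ 4 • (A * k) := nsmul_le_nsmul_left (mul_nonneg hA hk) (card_filter_adjZ_le B x)
    _ = 4 * (A * k) := by norm_num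

lemma two_mul_sum_grad_sq_le {D : Set Z2} {E : Finset (Z2 × Z2)} {η : Z2 → ℝ} (ha : 0 ≤ a)
    (hc : ∀ x y, adjZ x y → a ≤ c x y) (hDB : D ⊆ B) (hE : ↑E ⊆ intEdges D)
    (hη : ∀ x ∈ D, η x = 1) (u : Z2 → ℝ) :
    2 * a * ∑ b ∈ E, |grad u b| ^ 2
      ≤ ∑ x ∈ B, ∑ y ∈ B, edgeWeight c x y * ((η x ^ 2 + η y ^ 2) * (u y - u x) ^ 2) := by
  rw [← Finset.sum_product', Finset.mul_sum]
  calc ∑ b ∈ E, 2 * a * |grad u b| ^ 2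
      ≤ ∑ b ∈ E, edgeWeight c b.1 b.2 * ((η b.1 ^ 2 + η b.2 ^ 2) * (u b.2 - u b.1) ^ 2) := by
        refine Finset.sum_le_sum fun b hb => ?_
        have hb' := hE hb
        have hadj := adjZ_of_mem_intEdges hb'
        rw [edgeWeight, if_pos hadj, hη _ hb'.2.1, hη _ hb'.2.2, sq_abs, grad]
        linarith [mul_le_mul_of_nonneg_right (hc _ _ hadj) (sq_nonneg (u b.2 - u b.1))]
    _ ≤ _ := by
        refine Finset.sum_le_sum_of_subset_of_nonneg (fun b hb => ?_) fun b _ _ => ?_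
        · exact Finset.mem_product.2 ⟨hDB (hE hb).2.1, hDB (hE hb).2.2⟩
        · exact mul_nonneg (edgeWeight_nonneg (fun x y h => ha.trans (hc x y h)) _ _)
            (by positivity)

end EdgeWeight

section Cutoff

/-- The spatial cutoff: `1` on `B(x₀, r)`, decreasing linearly in the distance with slope `1 / r`,
and truncated to `0` outside `B(x₀, 2r - 1)`, so that every neighbor of a point of its support
still lies in `B(x₀, 2r)`. -/
def cutoff (x0 : Z2) (r : ℝ) (x : Z2) : ℝ :=
  if edist2 x x0 ≤ 2 * r - 1 then min 1 ((2 * r - edist2 x x0) / r) else 0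

variable {x0 x y : Z2} {r : ℝ}

lemma cutoff_nonneg (hr : 0 ≤ r) : 0 ≤ cutoff x0 r x := by
  unfold cutoff
  split_ifs with h
  exacts [le_min zero_le_one (div_nonneg (by linarith) hr), le_rfl]

lemma cutoff_le_one : cutoff x0 r x ≤ 1 := by
  unfold cutoff
  split_ifs
  exacts [min_le_left _ _, zero_le_one]

lemma cutoff_eq_one (hr : 1 ≤ r) (hx : x ∈ ballZ x0 r) : cutoff x0 r x = 1 := by
  have hx' : edist2 x x0 ≤ r := hx
  rw [cutoff, if_pos (by linarith), min_eq_left]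
  rw [one_le_div (by linarith)]
  linarith

lemma adjZ.mem_ballZ_of_cutoff_ne_zero (h : adjZ x y) (hx : cutoff x0 r x ≠ 0) :
    y ∈ ballZ x0 (2 * r) := by
  have hx' : edist2 x x0 ≤ 2 * r - 1 := by
    by_contra hfar
    exact hx (if_neg hfar)
  have hxy := (abs_sub_le_iff.1 ((abs_edist2_sub_le x y x0).trans h.edist2_eq_one.le)).2
  change edist2 y x0 ≤ 2 * r
  linarith

lemma cutoff_sub_le (hr : 0 < r) (h : adjZ x y) : cutoff x0 r x - cutoff x0 r y ≤ 2 / r := by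
  have hxy := (abs_sub_le_iff.1 ((abs_edist2_sub_le x y x0).trans h.edist2_eq_one.le)).2
  have hr₂ : 0 ≤ 2 / r := by positivity
  by_cases hx : edist2 x x0 ≤ 2 * r - 1
  · have hcutoff : cutoff x0 r x ≤ (2 * r - edist2 x x0) / r := by
      rw [cutoff, if_pos hx]
      exact min_le_right _ _
    by_cases hy : edist2 y x0 ≤ 2 * r - 1
    · have hslope : (2 * r - edist2 x x0) / r ≤ (2 * r - edist2 y x0) / r + 2 / r := by
        rw [← add_div]
        gcongr
        linarith
      rw [sub_le_iff_le_add', cutoff.eq_def x0 r y, if_pos hy, ← min_add_add_right]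
      exact le_min (by linarith [cutoff_le_one (x0 := x0) (r := r) (x := x)])
        (hcutoff.trans hslope)
    -- Across the truncation jump `2r - 2 < |x - x₀|`, so the cutoff at `x` is at most `2 / r`.
    · rw [cutoff.eq_def x0 r y, if_neg hy, sub_zero]
      refine hcutoff.trans ?_
      gcongr
      linarith
  · rw [cutoff, if_neg hx]
    linarith [cutoff_nonneg (x0 := x0) (x := y) hr.le]

lemma sq_cutoff_sub_le (hr : 0 < r) (h : adjZ x y) :
    (cutoff x0 r y - cutoff x0 r x) ^ 2 ≤ 4 / r ^ 2 := by
  have habs : |cutoff x0 r y - cutoff x0 r x| ≤ 2 / r :=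
    abs_sub_le_iff.2 ⟨cutoff_sub_le hr (adjZ_comm.1 h), cutoff_sub_le hr h⟩
  calc (cutoff x0 r y - cutoff x0 r x) ^ 2 ≤ (2 / r) ^ 2 := sq_le_sq.2 (habs.trans (le_abs_self _))
    _ = 4 / r ^ 2 := by rw [div_pow]; norm_num

lemma sum_cutoff_sq_mul_le (hr : 0 ≤ r) (B : Finset Z2) (u : Z2 → ℝ) :
    ∑ x ∈ B, cutoff x0 r x ^ 2 * u x ^ 2 ≤ ∑ x ∈ B, u x ^ 2 :=
  Finset.sum_le_sum fun _ _ => mul_le_of_le_one_left (sq_nonneg _)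
    (pow_le_one₀ (cutoff_nonneg hr) cutoff_le_one)

lemma caccioppoli_cutoff {a A : ℝ} (ha : 0 ≤ a) (hA : 0 ≤ A) (hr : 1 ≤ r) {c : Z2 → Z2 → ℝ}
    (hc : ∀ x y, c x y = c y x) (hac : ∀ x y, adjZ x y → a ≤ c x y ∧ c x y ≤ A)
    {B : Finset Z2} (hB : ballZ x0 (2 * r) ⊆ B)
    {E : Finset (Z2 × Z2)} (hE : ↑E ⊆ intEdges (ballZ x0 r)) (u : Z2 → ℝ) :
    ∑ x ∈ B, cutoff x0 r x ^ 2 * (2 * u x * ∑ e ∈ nbrs, c x (x + e) * (u (x + e) - u x))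
      ≤ 32 * A / r ^ 2 * ∑ x ∈ B, u x ^ 2 - a / 2 * ∑ b ∈ E, |grad u b| ^ 2 := by
  have hr₀ : 0 < r := by linarith
  set η := cutoff x0 r
  set κ := edgeWeight c
  calc ∑ x ∈ B, η x ^ 2 * (2 * u x * ∑ e ∈ nbrs, c x (x + e) * (u (x + e) - u x))
      = 2 * ∑ x ∈ B, η x ^ 2 * u x * ∑ y ∈ B, κ x y * (u y - u x) := by
        rw [Finset.mul_sum]
        refine Finset.sum_congr rfl fun x _ => ?_
        by_cases hx : η x = 0
        · simp [hx]
        · rw [sum_edgeWeight_mul (fun y hxy => hB (hxy.mem_ballZ_of_cutoff_ne_zero hx))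
            fun y => u y - u x]
          ring
    _ ≤ 2 * ∑ x ∈ B, (∑ y ∈ B, κ x y * (η y - η x) ^ 2) * u x ^ 2
        - 1 / 4 * ∑ x ∈ B, ∑ y ∈ B, κ x y * ((η x ^ 2 + η y ^ 2) * (u y - u x) ^ 2) :=
        caccioppoli_weighted (edgeWeight_comm hc)
          (edgeWeight_nonneg fun x y hxy => ha.trans (hac x y hxy).1) η u
    _ ≤ 2 * ∑ x ∈ B, 4 * (A * (4 / r ^ 2)) * u x ^ 2
        - 1 / 4 * (2 * a * ∑ b ∈ E, |grad u b| ^ 2) := by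
        gcongr with x _
        · exact sum_edgeWeight_mul_le hA (fun x y hxy => (hac x y hxy).2) x
            (fun _ => sq_nonneg _) (fun _ hxy => sq_cutoff_sub_le hr₀ hxy) (by positivity)
        · exact two_mul_sum_grad_sq_le ha (fun x y hxy => (hac x y hxy).1)
            ((ballZ_subset_ballZ x0 (by linarith)).trans hB) hE (fun x hx => cutoff_eq_one hr hx) u
    _ = 32 * A / r ^ 2 * ∑ x ∈ B, u x ^ 2 - a / 2 * ∑ b ∈ E, |grad u b| ^ 2 := by
        rw [← Finset.mul_sum]
        ring

end Cutoff

theorem discrete_caccioppoli_general {a A : ℝ} (ha : 0 < a) (haA : a ≤ A) {x0 : Z2} {r : ℝ}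
    (hr : 1 ≤ r) {c : ℝ → Z2 → Z2 → ℝ}
    (hc : ∀ t ∈ Set.Ioo (0 : ℝ) (2 * r ^ 2), ∀ x y, c t x y = c t y x)
    (hac : ∀ t ∈ Set.Ioo (0 : ℝ) (2 * r ^ 2), ∀ x y, adjZ x y → a ≤ c t x y ∧ c t x y ≤ A)
    {f : ℝ → Z2 → ℝ}
    (hf : ∀ x ∈ ballZ x0 (2 * r), ContinuousOn (fun t => f t x) (Set.Icc 0 (2 * r ^ 2)))
    (hf' : ∀ x ∈ ballZ x0 (2 * r), ∀ t ∈ Set.Ioo (0 : ℝ) (2 * r ^ 2),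
      HasDerivAt (fun s => f s x) (∑ e ∈ nbrs, c t x (x + e) * (f t (x + e) - f t x)) t) :
    ∫ t in (r ^ 2)..(2 * r ^ 2), ∑ᶠ b ∈ intEdges (ballZ x0 r), |grad (f t) b| ^ 2
      ≤ 2 * (1 + 64 * A) / a / r ^ 2 *
        ∫ t in (0 : ℝ)..(2 * r ^ 2), ∑ᶠ y ∈ ballZ x0 (2 * r), f t y ^ 2 := by
  obtain ⟨B, hB⟩ := (ballZ_finite x0 (2 * r)).exists_finset_coe
  obtain ⟨E, hE⟩ := (intEdges_finite (ballZ_finite x0 r)).exists_finset_coe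
  have hA : 0 ≤ A := ha.le.trans haA
  have hr₀ : 0 < r := by linarith
  have hT : 0 ≤ 2 * r ^ 2 := by positivity
  have hfB : ∀ x ∈ B, ContinuousOn (fun t => f t x) (Set.Icc 0 (2 * r ^ 2)) :=
    fun x hx => hf x (hB ▸ hx)
  have hEB : ∀ b ∈ E, b.1 ∈ B ∧ b.2 ∈ B := fun b hb =>
    have hb' := (hE.le hb).2
    have hrB := (ballZ_subset_ballZ x0 (by linarith)).trans hB.ge
    ⟨hrB hb'.1, hrB hb'.2⟩
  simp only [← hE, finsum_mem_coe_finset]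
  simp only [← hB, finsum_mem_coe_finset]
  have energy := mul_integral_dissipation_le (τ := r ^ 2) (T := 2 * r ^ 2)
    (F := fun t => ∑ x ∈ B, cutoff x0 r x ^ 2 * f t x ^ 2)
    (S := fun t => ∑ x ∈ B, f t x ^ 2) (D := fun t => ∑ b ∈ E, |grad (f t) b| ^ 2)
    (k := a / 2) (K := 32 * A / r ^ 2)
    (hk := by positivity) (hK := by positivity) (hτ := by positivity)
    (hτT := by linarith [sq_nonneg r])
    (hF := continuousOn_finsetSum _ fun x hx => ((hfB x hx).pow 2).const_mul _)
    (hF' := fun t ht => hasDerivAt_sum_mul_sq (fun x hx => hf' x (hB ▸ hx) t ht) _)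
    (hF₀ := fun t _ => Finset.sum_nonneg fun x _ => by positivity)
    (hFS := fun t _ => sum_cutoff_sq_mul_le hr₀.le B (f t))
    (hS := (continuousOn_finsetSum _ fun x hx => (hfB x hx).pow 2).intervalIntegrable_of_Icc hT)
    (hD := (continuousOn_finsetSum _ fun b hb =>
      ((hfB _ (hEB b hb).2).sub (hfB _ (hEB b hb).1)).abs.pow 2).intervalIntegrable_of_Icc hT)
    (hD₀ := fun t _ => Finset.sum_nonneg fun b _ => by positivity)
    (hle := fun t ht => caccioppoli_cutoff ha.le hA hr (hc t ht) (hac t ht) hB.ge hE.le (f t))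
  rw [show 32 * A / r ^ 2 * (2 * r ^ 2) = 64 * A by field_simp; ring] at energy
  rw [div_div, div_mul_eq_mul_div, le_div_iff₀ (by positivity)]
  linarith

/-- Discrete parabolic Caccioppoli inequality.
There is `C > 0` depending only on `0 < a ≤ A < ∞` such that: if `f` solves
`∂_t f_t(x) = Σ_{y∼x} c_t((x,y))(f_t(y) − f_t(x))` on `B(x₀, 2r) × [0, 2r²]` with rates
`c_t(b) ∈ [a, A]` measurable in `t`, then
`∫_{r²}^{2r²} Σ_{b ∈ B*(x₀,r)} |∇f_t(b)|² dt ≤ (C/r²) ∫_0^{2r²} Σ_{y ∈ B(x₀,2r)} f_t(y)² dt`. -/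
theorem discrete_caccioppoli (a A : ℝ) (ha : 0 < a) (haA : a ≤ A) :
    ∃ C : ℝ, 0 < C ∧
      ∀ (x0 : Z2) (r : ℝ), 1 ≤ r →
      ∀ c : ℝ → Z2 → Z2 → ℝ,
        (∀ t x y, c t x y = c t y x) →
        (∀ t ∈ Set.Icc (0 : ℝ) (2 * r ^ 2), ∀ x y : Z2, adjZ x y →
          a ≤ c t x y ∧ c t x y ≤ A) →
        (∀ x y : Z2, Measurable fun t : Set.Icc (0 : ℝ) (2 * r ^ 2) => c (t : ℝ) x y) →
      ∀ f : ℝ → Z2 → ℝ,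
        (∀ x ∈ ballZ x0 (2 * r), ∀ t ∈ Set.Icc (0 : ℝ) (2 * r ^ 2),
          HasDerivAt (fun s => f s x)
            (∑ e ∈ nbrs, c t x (x + e) * (f t (x + e) - f t x)) t) →
        (∫ t in (r ^ 2)..(2 * r ^ 2), ∑ᶠ b ∈ intEdges (ballZ x0 r), |grad (f t) b| ^ 2)
          ≤ C / r ^ 2 * ∫ t in (0 : ℝ)..(2 * r ^ 2), ∑ᶠ y ∈ ballZ x0 (2 * r), (f t y) ^ 2 := by
  have hA : 0 < A := ha.trans_le haA
  exact ⟨2 * (1 + 64 * A) / a, by positivity, fun x0 r hr c hc hac _ f hf =>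
    discrete_caccioppoli_general ha haA hr (fun t _ => hc t)
      (fun t ht => hac t (Set.Ioo_subset_Icc_self ht))
      (fun x hx t ht => (hf x hx t ht).continuousAt.continuousWithinAt)
      (fun x hx t ht => hf x hx t (Set.Ioo_subset_Icc_self ht))⟩

end
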